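/- Let d ≥ 1, C > 0, t₀ > 0, and let u₀ : ℝ^d → ℝ be measurable with |u₀(x)| ≤ C e^{−|x|²/(4t₀)} for almost every x. Let u(x,t) := (G(·,t) * u₀)(x) and let u_k be the heat-kernel derivative approximation of order k built from u₀. Then for every fixed t > t₀, sup_{x ∈ ℝ^d} |u(x,t) − u_k(x,t)| → 0 as k → ∞. -/

import Mathlib

open MeasureTheory Real Filter

noncomputable section

/-- Partial derivative in the `i`-th coordinate direction on `ℝ^d`. -/
def pd (d : ℕ) (i : Fin d) (f : EuclideanSpace ℝ (Fin d) → ℝ) :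
    EuclideanSpace ℝ (Fin d) → ℝ :=
  fun x => fderiv ℝ f x (EuclideanSpace.single i 1)

/-- Mixed partial derivative `D^α = ∂₁^{α₁} ⋯ ∂_d^{α_d}`. -/
def Dmul (d : ℕ) (α : Fin d → ℕ) (f : EuclideanSpace ℝ (Fin d) → ℝ) :
    EuclideanSpace ℝ (Fin d) → ℝ :=
  ((List.finRange d).map (fun i => (pd d i)^[α i])).foldr (· ∘ ·) id f

/-- Heat kernel `G(x,t) = (4πt)^{-d/2} exp(-|x|²/(4t))` on `ℝ^d`. -/
def heatKernel (d : ℕ) (x : EuclideanSpace ℝ (Fin d)) (t : ℝ) : ℝ :=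
  (4 * π * t) ^ (-(d : ℝ) / 2) * Real.exp (-‖x‖ ^ 2 / (4 * t))

/-- The heat-kernel derivative approximation of order `k` built from `u₀`. -/
def heatApprox (d k : ℕ) (u₀ : EuclideanSpace ℝ (Fin d) → ℝ)
    (x : EuclideanSpace ℝ (Fin d)) (t : ℝ) : ℝ :=
  ∑ j ∈ Finset.range (k + 1), ∑ α ∈ Finset.Nat.antidiagonalTuple d j,
    ((-1 : ℝ) ^ (∑ i, α i) / ∏ i, ((α i).factorial : ℝ)) *
      (∫ y, (∏ i, y i ^ α i) * u₀ y) * Dmul d α (fun z => heatKernel d z t) x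

/-- The remainder function `F_α`. Here `k` should satisfy `|α| = k+1`. -/
def Falpha (d k : ℕ) (α : Fin d → ℕ) (f : EuclideanSpace ℝ (Fin d) → ℝ)
    (x : EuclideanSpace ℝ (Fin d)) : ℝ :=
  (-1 : ℝ) ^ (∑ i, α i) * ∫ t in (0:ℝ)..1,
    ((k : ℝ) + 1) * (1 - t) ^ k / t ^ (d + ∑ i, α i) *
      ((∏ i, x i ^ α i) / ∏ i, ((α i).factorial : ℝ)) * f (t⁻¹ • x)

/-- Physicists' Hermite polynomial `H_n(x) = (-1)^n e^{x²} (d/dx)^n e^{-x²}`. -/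
def hPoly (n : ℕ) (x : ℝ) : ℝ :=
  (-1 : ℝ) ^ n * Real.exp (x ^ 2) * iteratedDeriv n (fun y => Real.exp (-y ^ 2)) x


section Helpers

open scoped FourierTransform RealInnerProductSpace

lemma integrable_exp_neg_mul_sq_norm {V : Type*} [NormedAddCommGroup V] [InnerProductSpace ℝ V]
    [FiniteDimensional ℝ V] [MeasurableSpace V] [BorelSpace V] {b : ℝ} (hb : 0 < b) :
    Integrable (fun v : V => Real.exp (-b * ‖v‖ ^ 2)) := by
  have h := (GaussianFourier.integrable_cexp_neg_mul_sq_norm_add (V := V) (b := (b : ℂ))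
    (by simpa using hb) 0 0).norm
  refine h.congr (Eventually.of_forall fun v => ?_)
  simp only [zero_mul, add_zero, Complex.norm_exp]
  norm_cast

lemma integrable_norm_pow_mul_exp_neg_mul_sq_norm {V : Type*} [NormedAddCommGroup V]
    [InnerProductSpace ℝ V] [FiniteDimensional ℝ V] [MeasurableSpace V] [BorelSpace V]
    {b : ℝ} (hb : 0 < b) (n : ℕ) :
    Integrable (fun v : V => ‖v‖ ^ n * Real.exp (-b * ‖v‖ ^ 2)) := by
  refine ((integrable_exp_neg_mul_sq_norm (V := V) (half_pos hb)).const_mul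
    ((n.factorial : ℝ) * Real.exp (1 / (2 * b)))).mono' (by fun_prop)
    (Eventually.of_forall fun v => ?_)
  rw [Real.norm_of_nonneg (by positivity)]
  have h1 : ‖v‖ ^ n ≤ n.factorial * Real.exp ‖v‖ := by
    have := Real.pow_div_factorial_le_exp _ (norm_nonneg v) n
    rwa [div_le_iff₀' (by positivity)] at this
  have h2 : ‖v‖ + -b * ‖v‖ ^ 2 ≤ 1 / (2 * b) + -(b / 2) * ‖v‖ ^ 2 := by
    have : 1 / (2 * b) + -(b / 2) * ‖v‖ ^ 2 - (‖v‖ + -b * ‖v‖ ^ 2)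
        = (b * ‖v‖ - 1) ^ 2 / (2 * b) := by field_simp; ring
    have : 0 ≤ (b * ‖v‖ - 1) ^ 2 / (2 * b) := by positivity
    linarith
  calc ‖v‖ ^ n * Real.exp (-b * ‖v‖ ^ 2)
      ≤ n.factorial * Real.exp ‖v‖ * Real.exp (-b * ‖v‖ ^ 2) := by gcongr
    _ = n.factorial * Real.exp (‖v‖ + -b * ‖v‖ ^ 2) := by rw [Real.exp_add]; ring
    _ ≤ n.factorial * Real.exp (1 / (2 * b) + -(b / 2) * ‖v‖ ^ 2) := by gcongr
    _ = _ := by rw [Real.exp_add]; ring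

lemma abs_prod_pow_le {d : ℕ} (α : Fin d → ℕ) (v : EuclideanSpace ℝ (Fin d)) :
    |∏ i, v i ^ α i| ≤ ‖v‖ ^ ∑ i, α i := by
  rw [Finset.abs_prod, ← Finset.prod_pow_eq_pow_sum]
  refine Finset.prod_le_prod (fun i _ => abs_nonneg _) fun i _ => ?_
  rw [abs_pow]
  exact pow_le_pow_left₀ (abs_nonneg _) (PiLp.norm_apply_le v i) _

/-- The Fourier symbol of `D^α` applied to a Gaussian: `(-2πi v)^α e^{-b|v|²}`. -/
def gaussSymbol {d : ℕ} (b : ℝ) (α : Fin d → ℕ) (v : EuclideanSpace ℝ (Fin d)) : ℂ :=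
  (∏ i, (-(2 * π * Complex.I) * v i) ^ α i) * Complex.exp (-b * ‖v‖ ^ 2)

lemma norm_cexp_neg_mul_sq_norm {V : Type*} [NormedAddCommGroup V] (b : ℝ) (v : V) :
    ‖Complex.exp (-b * ‖v‖ ^ 2)‖ = Real.exp (-b * ‖v‖ ^ 2) := by
  rw [Complex.norm_exp]; norm_cast

lemma norm_gaussSymbol_le {d : ℕ} (b : ℝ) (α : Fin d → ℕ) (v : EuclideanSpace ℝ (Fin d)) :
    ‖gaussSymbol b α v‖ ≤
      (2 * π) ^ (∑ i, α i) * (‖v‖ ^ (∑ i, α i) * Real.exp (-b * ‖v‖ ^ 2)) := by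
  have h : ‖∏ i, (-(2 * π * Complex.I) * (v i : ℂ)) ^ α i‖
      = (2 * π) ^ (∑ i, α i) * |∏ i, v i ^ α i| := by
    simp [mul_pow, Finset.prod_mul_distrib, Finset.prod_pow_eq_pow_sum, Finset.abs_prod,
      abs_of_pos Real.pi_pos]
  rw [gaussSymbol, norm_mul, norm_cexp_neg_mul_sq_norm, h, mul_assoc]
  gcongr
  exact abs_prod_pow_le α v

lemma continuous_gaussSymbol {d : ℕ} (b : ℝ) (α : Fin d → ℕ) :
    Continuous (gaussSymbol b α) := by
  unfold gaussSymbol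
  fun_prop

lemma integrable_gaussSymbol {d : ℕ} {b : ℝ} (hb : 0 < b) (α : Fin d → ℕ) :
    Integrable (gaussSymbol b α) :=
  ((integrable_norm_pow_mul_exp_neg_mul_sq_norm hb _).const_mul _).mono'
    (continuous_gaussSymbol b α).aestronglyMeasurable
    (Eventually.of_forall fun v => norm_gaussSymbol_le b α v)

lemma integrable_norm_mul_gaussSymbol {d : ℕ} {b : ℝ} (hb : 0 < b) (α : Fin d → ℕ) :
    Integrable (fun v => ‖v‖ * ‖gaussSymbol b α v‖) := by
  refine ((integrable_norm_pow_mul_exp_neg_mul_sq_norm hb (∑ i, α i + 1)).const_mul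
    ((2 * π) ^ (∑ i, α i))).mono'
    (continuous_norm.mul (continuous_gaussSymbol b α).norm).aestronglyMeasurable
    (Eventually.of_forall fun v => ?_)
  rw [Real.norm_of_nonneg (by positivity)]
  calc ‖v‖ * ‖gaussSymbol b α v‖ ≤ ‖v‖ * _ :=
        mul_le_mul_of_nonneg_left (norm_gaussSymbol_le b α v) (norm_nonneg v)
    _ = _ := by ring

lemma pd_re_fourier_gaussSymbol {d : ℕ} {b : ℝ} (hb : 0 < b) (i : Fin d) (α : Fin d → ℕ) :
    pd d i (fun x => (𝓕 (gaussSymbol b α) x).re) =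
      fun x => (𝓕 (gaussSymbol b (α + Pi.single i 1)) x).re := by
  funext x
  have hf := integrable_gaussSymbol hb α
  have hvf := integrable_norm_mul_gaussSymbol hb α
  have h := Complex.reCLM.hasFDerivAt.comp x (Real.hasFDerivAt_fourier hf hvf x)
  have hint : Integrable (VectorFourier.fourierSMulRight (innerSL ℝ) (gaussSymbol b α)) := by
    refine (hvf.const_mul (2 * π * ‖innerSL ℝ (E := EuclideanSpace ℝ (Fin d))‖)).mono'
      hf.1.fourierSMulRight (Eventually.of_forall fun v => ?_)
    exact (VectorFourier.norm_fourierSMulRight_le _ _ v).trans_eq (by ring)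
  unfold pd
  erw [h.fderiv]
  simp only [ContinuousLinearMap.comp_apply, Complex.reCLM_apply]
  rw [Real.fourier_continuousLinearMap_apply hint]
  congr 1
  refine congrArg (fun f : EuclideanSpace ℝ (Fin d) → ℂ =>
    (𝓕 f : EuclideanSpace ℝ (Fin d) → ℂ) x) (funext fun v => ?_)
  have hi : innerSL ℝ v (EuclideanSpace.single i (1 : ℝ)) = v i := by
    simp [innerSL_apply_apply, EuclideanSpace.inner_single_right]
  rw [VectorFourier.fourierSMulRight_apply, hi]
  simp only [gaussSymbol, Pi.add_apply,
    pow_add, Finset.prod_mul_distrib]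
  rw [Finset.prod_eq_single (s := Finset.univ) (f := fun j => (-(2 * π * Complex.I) * (v j : ℂ)) ^
    (Pi.single i 1 : Fin d → ℕ) j) i (fun j _ hj => by simp [hj]) (by simp)]
  simp
  ring

lemma iterate_pd_eq {d : ℕ} {F : (Fin d → ℕ) → EuclideanSpace ℝ (Fin d) → ℝ}
    (hF : ∀ i α, pd d i (F α) = F (α + Pi.single i 1)) (i : Fin d) (n : ℕ) (α : Fin d → ℕ) :
    (pd d i)^[n] (F α) = F (α + Pi.single i n) := by
  induction n with
  | zero => simp
  | succ n ih => rw [Function.iterate_succ_apply', ih, hF, add_assoc, ← Pi.single_add]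

lemma Dmul_eq {d : ℕ} {F : (Fin d → ℕ) → EuclideanSpace ℝ (Fin d) → ℝ}
    (hF : ∀ i α, pd d i (F α) = F (α + Pi.single i 1)) (α : Fin d → ℕ) :
    Dmul d α (F 0) = F α := by
  have key : ∀ l : List (Fin d),
      (l.map (fun i => (pd d i)^[α i])).foldr (· ∘ ·) id (F 0)
        = F ((l.map fun i => (Pi.single i (α i) : Fin d → ℕ)).sum) := by
    intro l
    induction l with
    | nil => simp
    | cons i l ih =>
      simp only [List.map_cons, List.foldr_cons, Function.comp_apply, List.sum_cons, ih]
      rw [iterate_pd_eq hF, add_comm]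
  rw [Dmul, key]
  congr 1
  rw [← List.ofFn_eq_map, List.sum_ofFn, Finset.univ_sum_single]

lemma heatKernel_eq_re_fourier {d : ℕ} {t : ℝ} (ht : 0 < t) (x : EuclideanSpace ℝ (Fin d)) :
    heatKernel d x t = (𝓕 (gaussSymbol (d := d) (4 * π ^ 2 * t) 0) x).re := by
  have hb : 0 < (((4 * π ^ 2 * t : ℝ)) : ℂ).re := by
    rw [Complex.ofReal_re]; positivity
  have h := fourier_gaussian_innerProductSpace hb x
  have hs : gaussSymbol (d := d) (4 * π ^ 2 * t) 0
      = fun v => Complex.exp (-((4 * π ^ 2 * t : ℝ) : ℂ) * ‖v‖ ^ 2) := by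
    funext v; simp [gaussSymbol]
  rw [hs, h, heatKernel]
  have e1 : (π : ℂ) / ((4 * π ^ 2 * t : ℝ) : ℂ) = ((4 * π * t)⁻¹ : ℝ) := by
    have := Real.pi_ne_zero
    rw [← Complex.ofReal_div]
    congr 1
    field_simp
  have e2 : (-π ^ 2 * ‖x‖ ^ 2 / ((4 * π ^ 2 * t : ℝ) : ℂ)) = ((-‖x‖ ^ 2 / (4 * t) : ℝ) : ℂ) := by
    have := Real.pi_ne_zero
    norm_cast
    field_simp
  have e3 : ((Module.finrank ℝ (EuclideanSpace ℝ (Fin d)) : ℂ) / 2) = (((d : ℝ) / 2 : ℝ) : ℂ) := by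
    simp
  rw [e1, e2, e3, ← Complex.ofReal_cpow (by positivity), ← Complex.ofReal_exp,
    ← Complex.ofReal_mul, Complex.ofReal_re, Real.inv_rpow (by positivity), neg_div,
    Real.rpow_neg (by positivity)]

lemma Dmul_heatKernel {d : ℕ} {t : ℝ} (ht : 0 < t) (α : Fin d → ℕ)
    (x : EuclideanSpace ℝ (Fin d)) :
    Dmul d α (fun z => heatKernel d z t) x
      = (𝓕 (gaussSymbol (4 * π ^ 2 * t) α) x).re := by
  simp only [heatKernel_eq_re_fourier ht]
  exact congrFun (Dmul_eq (F := fun α x => (𝓕 (gaussSymbol (4 * π ^ 2 * t) α) x).re)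
    (fun i α => pd_re_fourier_gaussSymbol (by positivity) i α) α) x

lemma sum_antidiagonalTuple_prod_pow_div {d : ℕ} (j : ℕ) (z : Fin d → ℂ) :
    ∑ α ∈ Finset.Nat.antidiagonalTuple d j, (∏ i, z i ^ α i) / ∏ i, ((α i).factorial : ℂ)
      = (∑ i, z i) ^ j / j.factorial := by
  rw [Finset.sum_pow_eq_sum_piAntidiag, Finset.piAntidiag_univ_fin_eq_antidiagonalTuple,
    Finset.sum_div]
  refine Finset.sum_congr rfl fun α hα => ?_
  rw [Finset.Nat.mem_antidiagonalTuple] at hα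
  have h := Nat.multinomial_spec Finset.univ α
  rw [hα] at h
  have h' : (∏ i, ((α i).factorial : ℂ)) * (Nat.multinomial Finset.univ α : ℂ)
      = (j.factorial : ℂ) := by exact_mod_cast h
  have h1 : (∏ i, ((α i).factorial : ℂ)) ≠ 0 :=
    Finset.prod_ne_zero_iff.2 fun i _ => Nat.cast_ne_zero.2 (Nat.factorial_ne_zero _)
  have h2 : (j.factorial : ℂ) ≠ 0 := Nat.cast_ne_zero.2 (Nat.factorial_ne_zero _)
  rw [div_eq_div_iff h1 h2, ← h']
  ring

lemma fourier_finset_sum_mul {V ι : Type*} [NormedAddCommGroup V] [InnerProductSpace ℝ V]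
    [FiniteDimensional ℝ V] [MeasurableSpace V] [BorelSpace V] (s : Finset ι) (c : ι → ℂ)
    (f : ι → V → ℂ) (hf : ∀ i ∈ s, Integrable (f i)) (x : V) :
    𝓕 (fun v => ∑ i ∈ s, c i * f i v) x = ∑ i ∈ s, c i * 𝓕 (f i) x := by
  simp only [Real.fourier_eq, Finset.smul_sum, ← integral_const_mul]
  rw [integral_finsetSum]
  · simp only [mul_smul_comm]
  · intro i hi
    exact (Real.fourierIntegral_convergent_iff x).2 ((hf i hi).const_mul _)

lemma fourier_sub_apply {V : Type*} [NormedAddCommGroup V] [InnerProductSpace ℝ V]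
    [FiniteDimensional ℝ V] [MeasurableSpace V] [BorelSpace V] {f g : V → ℂ}
    (hf : Integrable f) (hg : Integrable g) (x : V) :
    𝓕 (fun v => f v - g v) x = 𝓕 f x - 𝓕 g x := by
  simp only [Real.fourier_eq, smul_sub]
  exact integral_sub ((Real.fourierIntegral_convergent_iff x).2 hf)
    ((Real.fourierIntegral_convergent_iff x).2 hg)

/-- The integral kernel of `heatApprox`: the Taylor polynomial of order `k` in `y` of
`heatKernel d (x - y) t`. -/
def heatTaylor (d k : ℕ) (x y : EuclideanSpace ℝ (Fin d)) (t : ℝ) : ℝ :=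
  ∑ j ∈ Finset.range (k + 1), ∑ α ∈ Finset.Nat.antidiagonalTuple d j,
    ((-1 : ℝ) ^ (∑ i, α i) / ∏ i, ((α i).factorial : ℝ)) *
      (∏ i, y i ^ α i) * Dmul d α (fun z => heatKernel d z t) x

lemma sum_gaussSymbol_eq {d : ℕ} (b : ℝ) (j : ℕ) (y v : EuclideanSpace ℝ (Fin d)) :
    ∑ α ∈ Finset.Nat.antidiagonalTuple d j,
      (((-1 : ℝ) ^ (∑ i, α i) / (∏ i, ((α i).factorial : ℝ)) * ∏ i, y i ^ α i : ℝ) : ℂ) *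
        gaussSymbol b α v
      = (2 * π * Complex.I * ⟪v, y⟫) ^ j / j.factorial * gaussSymbol b 0 v := by
  have hz : (2 * π * Complex.I * (⟪v, y⟫ : ℝ) : ℂ)
      = ∑ i, 2 * π * Complex.I * (v i * y i) := by
    rw [PiLp.inner_apply, Complex.ofReal_sum, Finset.mul_sum]
    refine Finset.sum_congr rfl fun i _ => ?_
    simp
    ring
  rw [hz, ← sum_antidiagonalTuple_prod_pow_div, Finset.sum_mul]
  refine Finset.sum_congr rfl fun α _ => ?_
  have : ∏ i, (2 * π * Complex.I * (v i * y i : ℂ)) ^ α i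
      = (-1) ^ (∑ i, α i) * (∏ i, (y i : ℂ) ^ α i) *
        ∏ i, (-(2 * π * Complex.I) * (v i : ℂ)) ^ α i := by
    rw [← Finset.prod_pow_eq_pow_sum, ← Finset.prod_mul_distrib, ← Finset.prod_mul_distrib]
    refine Finset.prod_congr rfl fun i _ => ?_
    rw [← mul_pow, ← mul_pow]
    ring
  rw [this]
  simp only [gaussSymbol, Pi.zero_apply, pow_zero, Finset.prod_const_one, one_mul]
  push_cast
  ring

lemma integrable_sum_gaussSymbol {d : ℕ} {b : ℝ} (hb : 0 < b) (j : ℕ)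
    (y : EuclideanSpace ℝ (Fin d)) :
    Integrable fun v : EuclideanSpace ℝ (Fin d) =>
      (2 * π * Complex.I * ⟪v, y⟫) ^ j / j.factorial * gaussSymbol b 0 v := by
  simp only [← sum_gaussSymbol_eq]
  exact integrable_finsetSum _ fun α _ => (integrable_gaussSymbol hb α).const_mul _

lemma heatTaylor_eq_re_fourier {d k : ℕ} {t : ℝ} (ht : 0 < t) (x y : EuclideanSpace ℝ (Fin d)) :
    heatTaylor d k x y t = (𝓕 (fun v : EuclideanSpace ℝ (Fin d) =>
      (∑ j ∈ Finset.range (k + 1), (2 * π * Complex.I * ⟪v, y⟫) ^ j / j.factorial) *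
        gaussSymbol (4 * π ^ 2 * t) 0 v) x).re := by
  have hb : 0 < 4 * π ^ 2 * t := by positivity
  have h := fourier_finset_sum_mul (Finset.range (k + 1)) (fun _ => 1)
    (fun j (v : EuclideanSpace ℝ (Fin d)) =>
      (2 * π * Complex.I * ⟪v, y⟫) ^ j / j.factorial * gaussSymbol (4 * π ^ 2 * t) 0 v)
    (fun j _ => integrable_sum_gaussSymbol hb j y) x
  simp only [one_mul] at h
  simp only [Finset.sum_mul]
  rw [h, heatTaylor, Complex.re_sum]
  refine Finset.sum_congr rfl fun j _ => ?_
  simp only [← sum_gaussSymbol_eq]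
  rw [fourier_finset_sum_mul _ _ _ fun α _ => integrable_gaussSymbol hb α, Complex.re_sum]
  refine Finset.sum_congr rfl fun α _ => ?_
  rw [Dmul_heatKernel ht, Complex.re_ofReal_mul]

lemma heatKernel_sub_eq_re_fourier {d : ℕ} {t : ℝ} (ht : 0 < t)
    (x y : EuclideanSpace ℝ (Fin d)) :
    heatKernel d (x - y) t = (𝓕 (fun v : EuclideanSpace ℝ (Fin d) =>
      Complex.exp (2 * π * Complex.I * ⟪v, y⟫) * gaussSymbol (4 * π ^ 2 * t) 0 v) x).re := by
  rw [heatKernel_eq_re_fourier ht, Real.fourier_eq', Real.fourier_eq']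
  congr 2
  ext1 v
  rw [smul_eq_mul, smul_eq_mul, ← mul_assoc, ← Complex.exp_add, inner_sub_right]
  congr 2
  push_cast
  ring

/-- The remainder of the exponential series after the term of order `k`. -/
def expTail (k : ℕ) (s : ℝ) : ℝ := Real.exp s - ∑ m ∈ Finset.range (k + 1), s ^ m / m.factorial

lemma continuous_expTail (k : ℕ) : Continuous (expTail k) := by
  unfold expTail; fun_prop

lemma expTail_nonneg (k : ℕ) {s : ℝ} (hs : 0 ≤ s) : 0 ≤ expTail k s :=
  sub_nonneg.2 (Real.sum_le_exp_of_nonneg hs _)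

lemma expTail_le_exp (k : ℕ) {s : ℝ} (hs : 0 ≤ s) : expTail k s ≤ Real.exp s :=
  sub_le_self _ (Finset.sum_nonneg fun _ _ => by positivity)

lemma tendsto_expTail (s : ℝ) : Tendsto (fun k => expTail k s) atTop (nhds 0) := by
  have h := (NormedSpace.expSeries_div_hasSum_exp s).tendsto_sum_nat
  rw [← Real.exp_eq_exp_ℝ] at h
  simpa [expTail] using ((h.comp (tendsto_add_atTop_nat 1)).const_sub (Real.exp s))

lemma expTail_mul_exp_le {V : Type*} [NormedAddCommGroup V] [InnerProductSpace ℝ V] (k : ℕ)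
    {s : ℝ} (hs : 0 < s) (t : ℝ) (v y : V) :
    expTail k (2 * π * |⟪v, y⟫|) * Real.exp (-(4 * π ^ 2 * t) * ‖v‖ ^ 2) ≤
      Real.exp (-(4 * π ^ 2 * (t - s)) * ‖v‖ ^ 2) * Real.exp (‖y‖ ^ 2 / (4 * s)) := by
  have h : 2 * π * (‖v‖ * ‖y‖) ≤ 4 * π ^ 2 * s * ‖v‖ ^ 2 + ‖y‖ ^ 2 / (4 * s) := by
    have h1 : 4 * π ^ 2 * s * ‖v‖ ^ 2 + ‖y‖ ^ 2 / (4 * s) - 2 * π * (‖v‖ * ‖y‖)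
        = (4 * π * s * ‖v‖ - ‖y‖) ^ 2 / (4 * s) := by field_simp; ring
    have h2 : 0 ≤ (4 * π * s * ‖v‖ - ‖y‖) ^ 2 / (4 * s) := by positivity
    linarith
  calc expTail k (2 * π * |⟪v, y⟫|) * Real.exp (-(4 * π ^ 2 * t) * ‖v‖ ^ 2)
      ≤ Real.exp (2 * π * |⟪v, y⟫|) * Real.exp (-(4 * π ^ 2 * t) * ‖v‖ ^ 2) := by
        gcongr
        exact expTail_le_exp k (by positivity)
    _ ≤ Real.exp (2 * π * (‖v‖ * ‖y‖)) * Real.exp (-(4 * π ^ 2 * t) * ‖v‖ ^ 2) := by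
        gcongr
        exact abs_real_inner_le_norm v y
    _ ≤ _ := by
        rw [← Real.exp_add, ← Real.exp_add, Real.exp_le_exp]
        linarith

lemma abs_heatKernel_sub_heatTaylor_le {d k : ℕ} {t : ℝ} (ht : 0 < t)
    (x y : EuclideanSpace ℝ (Fin d)) :
    |heatKernel d (x - y) t - heatTaylor d k x y t| ≤
      ∫ v : EuclideanSpace ℝ (Fin d),
        expTail k (2 * π * |⟪v, y⟫|) * Real.exp (-(4 * π ^ 2 * t) * ‖v‖ ^ 2) := by
  have hb : 0 < 4 * π ^ 2 * t := by positivity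
  have h1 : Integrable fun v : EuclideanSpace ℝ (Fin d) =>
      Complex.exp (2 * π * Complex.I * ⟪v, y⟫) * gaussSymbol (4 * π ^ 2 * t) 0 v := by
    refine (integrable_gaussSymbol hb 0).bdd_mul (c := 1) (by fun_prop)
      (Eventually.of_forall fun v => ?_)
    rw [Complex.norm_exp]
    simp
  have h2 : Integrable fun v : EuclideanSpace ℝ (Fin d) =>
      (∑ j ∈ Finset.range (k + 1), (2 * π * Complex.I * ⟪v, y⟫) ^ j / j.factorial) *
        gaussSymbol (4 * π ^ 2 * t) 0 v := by
    simp only [Finset.sum_mul]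
    exact integrable_finsetSum _ fun j _ => integrable_sum_gaussSymbol hb j y
  rw [heatKernel_sub_eq_re_fourier ht, heatTaylor_eq_re_fourier ht, ← Complex.sub_re,
    ← fourier_sub_apply h1 h2]
  refine (Complex.abs_re_le_norm _).trans ?_
  rw [Real.fourier_eq]
  refine (norm_integral_le_integral_norm _).trans ?_
  refine integral_mono_of_nonneg (Eventually.of_forall fun v => norm_nonneg _) ?_
    (Eventually.of_forall fun v => ?_)
  · refine ((integrable_exp_neg_mul_sq_norm (b := 4 * π ^ 2 * (t - t / 2)) (by
      have : 0 < t - t / 2 := by linarith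
      positivity)).mul_const (Real.exp (‖y‖ ^ 2 / (4 * (t / 2))))).mono'
      (((continuous_expTail k).comp (by fun_prop)).mul (by fun_prop)).aestronglyMeasurable
      (Eventually.of_forall fun v => ?_)
    rw [Real.norm_of_nonneg (mul_nonneg (expTail_nonneg k (by positivity)) (Real.exp_nonneg _))]
    exact expTail_mul_exp_le k (half_pos ht) t v y
  · have hz : ‖(2 * π * Complex.I * (⟪v, y⟫ : ℝ) : ℂ)‖ = 2 * π * |⟪v, y⟫| := by
      simp [abs_of_pos Real.pi_pos]
    have hg : ‖gaussSymbol (4 * π ^ 2 * t) 0 v‖ = Real.exp (-(4 * π ^ 2 * t) * ‖v‖ ^ 2) := by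
      rw [← norm_cexp_neg_mul_sq_norm]
      simp [gaussSymbol]
    simp only [Circle.norm_smul]
    rw [← sub_mul, norm_mul, hg, expTail, ← hz]
    gcongr
    exact Complex.norm_exp_sub_sum_le_exp_norm_sub_sum _ _

lemma integrable_prod_pow_mul {d : ℕ} {C c : ℝ} (hc : 0 < c)
    {u₀ : EuclideanSpace ℝ (Fin d) → ℝ} (hmeas : Measurable u₀)
    (hbound : ∀ᵐ x, |u₀ x| ≤ C * Real.exp (-c * ‖x‖ ^ 2)) (α : Fin d → ℕ) :
    Integrable fun y => (∏ i, y i ^ α i) * u₀ y := by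
  refine ((integrable_norm_pow_mul_exp_neg_mul_sq_norm hc (∑ i, α i)).const_mul C).mono'
    (Measurable.aestronglyMeasurable (by fun_prop)) ?_
  filter_upwards [hbound] with y hy
  rw [norm_mul, Real.norm_eq_abs, Real.norm_eq_abs]
  calc _ ≤ ‖y‖ ^ (∑ i, α i) * (C * Real.exp (-c * ‖y‖ ^ 2)) := by
        gcongr
        exact abs_prod_pow_le α y
    _ = _ := by ring

lemma integrable_heatTaylor_mul_and_integral_eq {d : ℕ} {C c : ℝ} (hc : 0 < c)
    {u₀ : EuclideanSpace ℝ (Fin d) → ℝ} (hmeas : Measurable u₀)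
    (hbound : ∀ᵐ x, |u₀ x| ≤ C * Real.exp (-c * ‖x‖ ^ 2)) (k : ℕ)
    (x : EuclideanSpace ℝ (Fin d)) (t : ℝ) :
    Integrable (fun y => heatTaylor d k x y t * u₀ y) ∧
      ∫ y, heatTaylor d k x y t * u₀ y = heatApprox d k u₀ x t := by
  have hα (α : Fin d → ℕ) := ((integrable_prod_pow_mul hc hmeas hbound α).const_mul
    ((-1 : ℝ) ^ (∑ i, α i) / ∏ i, ((α i).factorial : ℝ))).mul_const
      (Dmul d α (fun z => heatKernel d z t) x)
  have heq (y : EuclideanSpace ℝ (Fin d)) : heatTaylor d k x y t * u₀ y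
      = ∑ j ∈ Finset.range (k + 1), ∑ α ∈ Finset.Nat.antidiagonalTuple d j,
        ((-1 : ℝ) ^ (∑ i, α i) / ∏ i, ((α i).factorial : ℝ)) * ((∏ i, y i ^ α i) * u₀ y) *
          Dmul d α (fun z => heatKernel d z t) x := by
    simp only [heatTaylor, Finset.sum_mul]
    refine Finset.sum_congr rfl fun j _ => Finset.sum_congr rfl fun α _ => by ring
  simp only [heq]
  refine ⟨integrable_finsetSum _ fun j _ => integrable_finsetSum _ fun α _ => hα α, ?_⟩
  rw [integral_finsetSum _ fun j _ => integrable_finsetSum _ fun α _ => hα α, heatApprox]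
  refine Finset.sum_congr rfl fun j _ => ?_
  rw [integral_finsetSum _ fun α _ => hα α]
  refine Finset.sum_congr rfl fun α _ => ?_
  rw [integral_mul_const, integral_const_mul]

lemma integrable_heatKernel_sub_mul {d : ℕ} {t : ℝ} (ht : 0 < t)
    {u₀ : EuclideanSpace ℝ (Fin d) → ℝ} (hu₀ : Integrable u₀) (x : EuclideanSpace ℝ (Fin d)) :
    Integrable fun y => heatKernel d (x - y) t * u₀ y := by
  refine hu₀.bdd_mul (c := (4 * π * t) ^ (-(d : ℝ) / 2)) ?_ (Eventually.of_forall fun y => ?_)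
  · unfold heatKernel
    exact Continuous.aestronglyMeasurable (by fun_prop)
  · rw [heatKernel, Real.norm_of_nonneg (by positivity)]
    refine mul_le_of_le_one_right (by positivity) (Real.exp_le_one_iff.2 ?_)
    rw [neg_div]
    exact neg_nonpos.2 (by positivity)

/-- An `x`-independent majorant of `|G(x - y, t) - heatTaylor|` times the weight
`C e^{-|y|²/(4t₀)}`, before integration in the frequency `v`; the argument is `(y, v)`. -/
def remainderMajorant {d : ℕ} (C t₀ t : ℝ) (k : ℕ)
    (p : EuclideanSpace ℝ (Fin d) × EuclideanSpace ℝ (Fin d)) : ℝ :=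
  expTail k (2 * π * |⟪p.2, p.1⟫|) * Real.exp (-(4 * π ^ 2 * t) * ‖p.2‖ ^ 2) *
    (C * Real.exp (-‖p.1‖ ^ 2 / (4 * t₀)))

lemma exists_integrable_bound_remainderMajorant {d : ℕ} {C t₀ t : ℝ} (hC : 0 < C) (ht₀ : 0 < t₀)
    (ht : t₀ < t) :
    ∃ g : EuclideanSpace ℝ (Fin d) × EuclideanSpace ℝ (Fin d) → ℝ, Integrable g ∧
      ∀ k p, ‖remainderMajorant C t₀ t k p‖ ≤ g p := by
  obtain ⟨s, hs₀, hst⟩ := exists_between ht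
  have hs : 0 < s := ht₀.trans hs₀
  have hc : 0 < 1 / (4 * t₀) - 1 / (4 * s) := by
    rw [sub_pos]
    gcongr
  have hb : 0 < 4 * π ^ 2 * (t - s) := by
    have := sub_pos.2 hst
    positivity
  refine ⟨fun p => C * Real.exp (-(1 / (4 * t₀) - 1 / (4 * s)) * ‖p.1‖ ^ 2) *
    Real.exp (-(4 * π ^ 2 * (t - s)) * ‖p.2‖ ^ 2),
    ((integrable_exp_neg_mul_sq_norm hc).const_mul C).mul_prod
      (integrable_exp_neg_mul_sq_norm hb), fun k p => ?_⟩
  rw [remainderMajorant, Real.norm_of_nonneg (mul_nonneg (mul_nonneg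
    (expTail_nonneg k (by positivity)) (Real.exp_nonneg _)) (by positivity))]
  calc _ ≤ Real.exp (-(4 * π ^ 2 * (t - s)) * ‖p.2‖ ^ 2) * Real.exp (‖p.1‖ ^ 2 / (4 * s)) *
        (C * Real.exp (-‖p.1‖ ^ 2 / (4 * t₀))) := by
        exact mul_le_mul_of_nonneg_right (expTail_mul_exp_le k hs t p.2 p.1) (by positivity)
    _ = C * Real.exp (‖p.1‖ ^ 2 / (4 * s) + -‖p.1‖ ^ 2 / (4 * t₀)) *
        Real.exp (-(4 * π ^ 2 * (t - s)) * ‖p.2‖ ^ 2) := by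
        rw [Real.exp_add]
        ring
    _ = _ := by
        congr 3
        ring

lemma continuous_remainderMajorant {d : ℕ} (C t₀ t : ℝ) (k : ℕ) :
    Continuous (remainderMajorant (d := d) C t₀ t k) :=
  (((continuous_expTail k).comp (by fun_prop)).mul (by fun_prop)).mul (by fun_prop)

lemma tendsto_integral_remainderMajorant {d : ℕ} {C t₀ t : ℝ} (hC : 0 < C) (ht₀ : 0 < t₀)
    (ht : t₀ < t) :
    Tendsto (fun k => ∫ p, remainderMajorant (d := d) C t₀ t k p) atTop (nhds 0) := by
  obtain ⟨g, hg, hle⟩ := exists_integrable_bound_remainderMajorant (d := d) hC ht₀ ht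
  have h := tendsto_integral_of_dominated_convergence (f := fun _ => (0 : ℝ)) g
    (fun k => (continuous_remainderMajorant C t₀ t k).aestronglyMeasurable) hg
    (fun k => Eventually.of_forall (hle k)) (Eventually.of_forall fun p => by
      simpa only [remainderMajorant, zero_mul] using ((tendsto_expTail (2 * π * |⟪p.2, p.1⟫|)).mul_const
        (Real.exp (-(4 * π ^ 2 * t) * ‖p.2‖ ^ 2))).mul_const
          (C * Real.exp (-‖p.1‖ ^ 2 / (4 * t₀))))
  simpa using h

lemma abs_sub_heatApprox_le {d : ℕ} {C t₀ t : ℝ} (hC : 0 < C) (ht₀ : 0 < t₀) (ht : t₀ < t)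
    {u₀ : EuclideanSpace ℝ (Fin d) → ℝ} (hmeas : Measurable u₀)
    (hbound : ∀ᵐ x, |u₀ x| ≤ C * Real.exp (-‖x‖ ^ 2 / (4 * t₀))) (k : ℕ)
    (x : EuclideanSpace ℝ (Fin d)) :
    |(∫ y, heatKernel d (x - y) t * u₀ y) - heatApprox d k u₀ x t| ≤
      ∫ p, remainderMajorant (d := d) C t₀ t k p := by
  have htpos : 0 < t := ht₀.trans ht
  have hc : 0 < 1 / (4 * t₀) := by positivity
  have hbound' : ∀ᵐ x, |u₀ x| ≤ C * Real.exp (-(1 / (4 * t₀)) * ‖x‖ ^ 2) := by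
    filter_upwards [hbound] with x hx
    convert hx using 3
    ring
  have hu₀ : Integrable u₀ := by simpa using integrable_prod_pow_mul hc hmeas hbound' 0
  obtain ⟨hint, heq⟩ := integrable_heatTaylor_mul_and_integral_eq hc hmeas hbound' k x t
  obtain ⟨g, hg, hle⟩ := exists_integrable_bound_remainderMajorant (d := d) hC ht₀ ht
  have hR : Integrable (remainderMajorant (d := d) C t₀ t k) :=
    hg.mono' (continuous_remainderMajorant C t₀ t k).aestronglyMeasurable
      (Eventually.of_forall (hle k))
  rw [Measure.volume_eq_prod (EuclideanSpace ℝ (Fin d)) (EuclideanSpace ℝ (Fin d))] at hR ⊢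
  rw [← heq, ← integral_sub (integrable_heatKernel_sub_mul htpos hu₀ x) hint, integral_prod _ hR]
  rw [← Real.norm_eq_abs]
  refine norm_integral_le_of_norm_le hR.integral_prod_left ?_
  filter_upwards [hbound] with y hy
  rw [← sub_mul, norm_mul, Real.norm_eq_abs, Real.norm_eq_abs]
  simp only [remainderMajorant]
  rw [integral_mul_const]
  have h := abs_heatKernel_sub_heatTaylor_le (k := k) htpos x y
  exact mul_le_mul h hy (abs_nonneg _) ((abs_nonneg _).trans h)

end Helpers

/-- Convergence: if `|u₀| ≤ C e^{-|x|²/(4t₀)}` a.e. and `t > t₀`, then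
`sup_x |u(x,t) - u_k(x,t)| → 0` as `k → ∞`. -/
theorem stmt_9 (d : ℕ) (hd : 1 ≤ d) (C t₀ : ℝ) (hC : 0 < C) (ht₀ : 0 < t₀)
    (u₀ : EuclideanSpace ℝ (Fin d) → ℝ) (hmeas : Measurable u₀)
    (hbound : ∀ᵐ (x : EuclideanSpace ℝ (Fin d)) ∂volume,
      |u₀ x| ≤ C * Real.exp (-‖x‖ ^ 2 / (4 * t₀)))
    (t : ℝ) (ht : t₀ < t) :
    Tendsto (fun k : ℕ => ⨆ x : EuclideanSpace ℝ (Fin d),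
        |(∫ y, heatKernel d (x - y) t * u₀ y) - heatApprox d k u₀ x t|)
      atTop (nhds 0) := by
  refine squeeze_zero (fun k => Real.iSup_nonneg fun x => abs_nonneg _) (fun k => ?_)
    (tendsto_integral_remainderMajorant (d := d) hC ht₀ ht)
  exact ciSup_le fun x => abs_sub_heatApprox_le hC ht₀ ht hmeas hbound k x

end
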